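/- arXiv:2010.11814 — 3 statements merged into one kernel-verified Lean document; each statement's English description precedes it below -/
import Mathlib

section
/- Let X be a real normed linear space and let p ≥ 1. Then for all nonzero vectors x, y ∈ X: ‖x‖^p + ‖y‖^p − (‖x‖ + ‖y‖ − ‖x−y‖)·(max{‖x‖,‖y‖})^{p−1} ≤ α_p[x,y] ≤ ‖x‖^p + ‖y‖^p − (‖x‖ + ‖y‖ − ‖x−y‖)·(min{‖x‖,‖y‖})^{p−1}. -/
noncomputable def alphaD {X : Type*} [NormedAddCommGroup X] [NormedSpace ℝ X]
    (p : ℝ) (x y : X) : ℝ :=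
  ‖(‖x‖ ^ (p - 1)) • x - (‖y‖ ^ (p - 1)) • y‖

/-!
For scalars `c ≤ a, b` with `0 ≤ c`, the triangle inequality applied to
`a • x - b • y = c • (x - y) + ((a - c) • x - (b - c) • y)` bounds `‖a • x - b • y‖` from above;
for `a, b ≤ c`, the same identity solved for `c • (x - y)` bounds it from below.
With `a = ‖x‖ ^ (p - 1)` and `b = ‖y‖ ^ (p - 1)`, monotonicity of `t ↦ t ^ (p - 1)` allows
`c = (min ‖x‖ ‖y‖) ^ (p - 1)` in the first case and `c = (max ‖x‖ ‖y‖) ^ (p - 1)` in the second.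
-/

section NormSmulSubSmul

variable {E : Type*} [SeminormedAddCommGroup E] [NormedSpace ℝ E] {a b c : ℝ}

theorem norm_smul_sub_smul_le (ha : 0 ≤ a) (hb : 0 ≤ b) (x y : E) :
    ‖a • x - b • y‖ ≤ a * ‖x‖ + b * ‖y‖ := by
  simpa only [norm_smul_of_nonneg ha, norm_smul_of_nonneg hb] using norm_sub_le (a • x) (b • y)

theorem norm_smul_sub_smul_le_of_le (hc : 0 ≤ c) (hca : c ≤ a) (hcb : c ≤ b) (x y : E) :
    ‖a • x - b • y‖ ≤ a * ‖x‖ + b * ‖y‖ - (‖x‖ + ‖y‖ - ‖x - y‖) * c :=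
  calc
    ‖a • x - b • y‖ = ‖c • (x - y) + ((a - c) • x - (b - c) • y)‖ := by congr 1; module
    _ ≤ ‖c • (x - y)‖ + ‖(a - c) • x - (b - c) • y‖ := norm_add_le _ _
    _ ≤ c * ‖x - y‖ + ((a - c) * ‖x‖ + (b - c) * ‖y‖) :=
      add_le_add (norm_smul_of_nonneg hc _).le
        (norm_smul_sub_smul_le (sub_nonneg.2 hca) (sub_nonneg.2 hcb) x y)
    _ = a * ‖x‖ + b * ‖y‖ - (‖x‖ + ‖y‖ - ‖x - y‖) * c := by ring

theorem le_norm_smul_sub_smul_of_le (hac : a ≤ c) (hbc : b ≤ c) (x y : E) :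
    a * ‖x‖ + b * ‖y‖ - (‖x‖ + ‖y‖ - ‖x - y‖) * c ≤ ‖a • x - b • y‖ := by
  have h : c * ‖x - y‖ ≤ ‖a • x - b • y‖ + ((c - a) * ‖x‖ + (c - b) * ‖y‖) :=
    calc
      c * ‖x - y‖ ≤ ‖c • (x - y)‖ := by
        rw [norm_smul]
        exact mul_le_mul_of_nonneg_right (Real.le_norm_self c) (norm_nonneg _)
      _ = ‖(a • x - b • y) + ((c - a) • x - (c - b) • y)‖ := by congr 1; module
      _ ≤ ‖a • x - b • y‖ + ‖(c - a) • x - (c - b) • y‖ := norm_add_le _ _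
      _ ≤ ‖a • x - b • y‖ + ((c - a) * ‖x‖ + (c - b) * ‖y‖) := by
        gcongr
        exact norm_smul_sub_smul_le (sub_nonneg.2 hac) (sub_nonneg.2 hbc) x y
  linarith

end NormSmulSubSmul

theorem pAngular_bounds_p_ge_one
    {X : Type*} [NormedAddCommGroup X] [NormedSpace ℝ X]
    (p : ℝ) (hp : 1 ≤ p) (x y : X) (hx : x ≠ 0) (hy : y ≠ 0) :
    ‖x‖ ^ p + ‖y‖ ^ p - (‖x‖ + ‖y‖ - ‖x - y‖) * (max ‖x‖ ‖y‖) ^ (p - 1)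
        ≤ alphaD p x y ∧
      alphaD p x y
        ≤ ‖x‖ ^ p + ‖y‖ ^ p - (‖x‖ + ‖y‖ - ‖x - y‖) * (min ‖x‖ ‖y‖) ^ (p - 1) := by
  have rpow_eq_mul {z : X} (hz : z ≠ 0) : ‖z‖ ^ p = ‖z‖ ^ (p - 1) * ‖z‖ := by
    rw [← Real.rpow_add_one (norm_ne_zero_iff.2 hz), sub_add_cancel]
  have rpow_mono {s t : ℝ} (hs : 0 ≤ s) (hst : s ≤ t) : s ^ (p - 1) ≤ t ^ (p - 1) :=
    Real.rpow_le_rpow hs hst (sub_nonneg.2 hp)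
  have min_nonneg : 0 ≤ min ‖x‖ ‖y‖ := le_min (norm_nonneg x) (norm_nonneg y)
  rw [rpow_eq_mul hx, rpow_eq_mul hy]
  exact ⟨le_norm_smul_sub_smul_of_le (rpow_mono (norm_nonneg x) (le_max_left _ _))
      (rpow_mono (norm_nonneg y) (le_max_right _ _)) x y,
    norm_smul_sub_smul_le_of_le (Real.rpow_nonneg min_nonneg _)
      (rpow_mono min_nonneg (min_le_left _ _)) (rpow_mono min_nonneg (min_le_right _ _)) x y⟩
end

section
/- Let X be a real normed linear space and let p < 0. Then for all nonzero vectors x, y ∈ X: α_p[x,y] ≥ (p/(2p−1))·((min{‖x‖,‖y‖})^p / max{‖x‖,‖y‖})·‖x−y‖. -/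
/-!
Suppose `‖x‖ ≤ ‖y‖`. Writing `c • (x - y) = (c • x - d • y) - (c - d) • y` with `c = ‖x‖ ^ (p - 1)`
and `d = ‖y‖ ^ (p - 1)` bounds `c * ‖x - y‖` by `α_p[x, y] + (c - d) * ‖y‖`. The tangent line at
`‖y‖` of the convex function `t ↦ t ^ p` bounds `c - d` by a multiple of `‖x‖ ^ p - ‖y‖ ^ p`,
which is at most `α_p[x, y]` by the reverse triangle inequality. This yields
`-p * ‖x‖ ^ p * ‖x - y‖ ≤ ((1 - p) * ‖y‖ - p * ‖x‖) * α_p[x, y]`, where the factor is at most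
`(1 - 2 * p) * ‖y‖`.
-/

section RealPowers

variable {p : ℝ}

theorem one_add_mul_self_le_rpow_one_add_of_nonpos {s : ℝ} (hs : -1 < s) (hp : p ≤ 0) :
    1 + p * s ≤ (1 + s) ^ p := by
  have hpos : 0 < 1 + s := by linarith
  have hlog : Real.log (1 + s) ≤ s := by linarith [Real.log_le_sub_one_of_pos hpos]
  calc 1 + p * s ≤ 1 + p * Real.log (1 + s) := by
        linarith [mul_le_mul_of_nonpos_left hlog hp]
    _ ≤ Real.exp (Real.log (1 + s) * p) := by
        linarith [Real.add_one_le_exp (Real.log (1 + s) * p)]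
    _ = (1 + s) ^ p := (Real.rpow_def_of_pos hpos p).symm

theorem rpow_add_mul_rpow_sub_one_mul_sub_le_rpow {a b : ℝ} (ha : 0 < a) (hb : 0 < b)
    (hp : p ≤ 0) : b ^ p + p * b ^ (p - 1) * (a - b) ≤ a ^ p := by
  have hs : -1 < a / b - 1 := by linarith [div_pos ha hb]
  calc b ^ p + p * b ^ (p - 1) * (a - b) = b ^ p * (1 + p * (a / b - 1)) := by
        rw [Real.rpow_sub_one hb.ne']
        field_simp
    _ ≤ b ^ p * (1 + (a / b - 1)) ^ p := by
        gcongr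
        exact one_add_mul_self_le_rpow_one_add_of_nonpos hs hp
    _ = a ^ p := by
        rw [add_sub_cancel, Real.div_rpow ha.le hb.le, mul_div_cancel₀ _ (by positivity)]

theorem neg_mul_mul_rpow_sub_one_sub_le {a b : ℝ} (ha : 0 < a) (hb : 0 < b) (hp : p ≤ 0) :
    -p * a * (a ^ (p - 1) - b ^ (p - 1)) ≤ (1 - p) * (a ^ p - b ^ p) := by
  have htangent := rpow_add_mul_rpow_sub_one_mul_sub_le_rpow ha hb hp
  have hapow : a ^ (p - 1) * a = a ^ p := by rw [Real.rpow_sub_one ha.ne', div_mul_cancel₀ _ ha.ne']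
  have hbpow : b ^ (p - 1) * b = b ^ p := by rw [Real.rpow_sub_one hb.ne', div_mul_cancel₀ _ hb.ne']
  linear_combination htangent - p * hapow + p * hbpow

end RealPowers

theorem norm_smul_sub_le_norm_smul_sub_smul_add {R E : Type*} [Ring R]
    [SeminormedAddCommGroup E] [Module R E] (c d : R) (x y : E) :
    ‖c • (x - y)‖ ≤ ‖c • x - d • y‖ + ‖(c - d) • y‖ :=
  calc ‖c • (x - y)‖ = ‖(c • x - d • y) - (c - d) • y‖ := by
        rw [smul_sub, sub_smul, sub_sub_sub_cancel_right]
    _ ≤ ‖c • x - d • y‖ + ‖(c - d) • y‖ := norm_sub_le _ _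

theorem norm_rpow_sub_one_smul_self {E : Type*} [SeminormedAddCommGroup E] [NormedSpace ℝ E]
    (p : ℝ) {x : E} (hx : ‖x‖ ≠ 0) : ‖‖x‖ ^ (p - 1) • x‖ = ‖x‖ ^ p := by
  rw [norm_smul, Real.norm_of_nonneg (by positivity), Real.rpow_sub_one hx,
    div_mul_cancel₀ _ hx]

section AngularDistance

variable {X : Type*} [NormedAddCommGroup X] [NormedSpace ℝ X] {p : ℝ} {x y : X}

theorem alphaD_comm (p : ℝ) (x y : X) : alphaD p x y = alphaD p y x :=
  norm_sub_rev _ _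

theorem abs_norm_rpow_sub_norm_rpow_le_alphaD (p : ℝ) (hx : x ≠ 0) (hy : y ≠ 0) :
    |‖x‖ ^ p - ‖y‖ ^ p| ≤ alphaD p x y := by
  rw [← norm_rpow_sub_one_smul_self p (norm_ne_zero_iff.mpr hx),
    ← norm_rpow_sub_one_smul_self p (norm_ne_zero_iff.mpr hy)]
  exact abs_norm_sub_norm_le _ _

theorem norm_rpow_sub_one_mul_norm_sub_le_alphaD_add (hp : p ≤ 1) (hx : x ≠ 0)
    (hxy : ‖x‖ ≤ ‖y‖) :
    ‖x‖ ^ (p - 1) * ‖x - y‖ ≤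
      alphaD p x y + (‖x‖ ^ (p - 1) - ‖y‖ ^ (p - 1)) * ‖y‖ := by
  have hanti : ‖y‖ ^ (p - 1) ≤ ‖x‖ ^ (p - 1) :=
    Real.rpow_le_rpow_of_nonpos (norm_pos_iff.mpr hx) hxy (by linarith)
  have htriangle :=
    norm_smul_sub_le_norm_smul_sub_smul_add (‖x‖ ^ (p - 1)) (‖y‖ ^ (p - 1)) x y
  rwa [norm_smul, norm_smul, Real.norm_of_nonneg (by positivity),
    Real.norm_of_nonneg (sub_nonneg.mpr hanti)] at htriangle

theorem neg_mul_norm_rpow_mul_norm_sub_le_mul_alphaD (hp : p ≤ 0) (hx : x ≠ 0)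
    (hxy : ‖x‖ ≤ ‖y‖) :
    -p * ‖x‖ ^ p * ‖x - y‖ ≤ ((1 - p) * ‖y‖ - p * ‖x‖) * alphaD p x y := by
  have hx₀ : 0 < ‖x‖ := norm_pos_iff.mpr hx
  have hy₀ : 0 < ‖y‖ := hx₀.trans_le hxy
  have hneg : 0 ≤ -p := neg_nonneg.mpr hp
  have hdiff : ‖x‖ ^ p - ‖y‖ ^ p ≤ alphaD p x y :=
    (le_abs_self _).trans (abs_norm_rpow_sub_norm_rpow_le_alphaD p hx (norm_pos_iff.mp hy₀))
  calc -p * ‖x‖ ^ p * ‖x - y‖ = -p * ‖x‖ * (‖x‖ ^ (p - 1) * ‖x - y‖) := by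
        rw [Real.rpow_sub_one hx₀.ne']
        field_simp
    _ ≤ -p * ‖x‖ * (alphaD p x y + (‖x‖ ^ (p - 1) - ‖y‖ ^ (p - 1)) * ‖y‖) := by
        gcongr
        exact norm_rpow_sub_one_mul_norm_sub_le_alphaD_add (by linarith) hx hxy
    _ = -p * ‖x‖ * alphaD p x y + -p * ‖x‖ * (‖x‖ ^ (p - 1) - ‖y‖ ^ (p - 1)) * ‖y‖ := by ring
    _ ≤ -p * ‖x‖ * alphaD p x y + (1 - p) * (‖x‖ ^ p - ‖y‖ ^ p) * ‖y‖ := by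
        gcongr _ + ?_ * _
        exact neg_mul_mul_rpow_sub_one_sub_le hx₀ hy₀ hp
    _ ≤ -p * ‖x‖ * alphaD p x y + (1 - p) * alphaD p x y * ‖y‖ := by
        gcongr
        linarith
    _ = ((1 - p) * ‖y‖ - p * ‖x‖) * alphaD p x y := by ring

end AngularDistance

theorem pAngular_lower_bound_p_neg
    {X : Type*} [NormedAddCommGroup X] [NormedSpace ℝ X]
    (p : ℝ) (hp : p < 0) (x y : X) (hx : x ≠ 0) (hy : y ≠ 0) :
    alphaD p x y
      ≥ (p / (2 * p - 1)) * ((min ‖x‖ ‖y‖) ^ p / max ‖x‖ ‖y‖) * ‖x - y‖ := by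
  wlog hxy : ‖x‖ ≤ ‖y‖ generalizing x y
  · rw [alphaD_comm, min_comm, max_comm, norm_sub_rev]
    exact this y x hy hx (le_of_not_ge hxy)
  rw [min_eq_left hxy, max_eq_right hxy]
  have hy₀ : 0 < ‖y‖ := norm_pos_iff.mpr hy
  have hfactor : (1 - p) * ‖y‖ - p * ‖x‖ ≤ (1 - 2 * p) * ‖y‖ := by
    linarith [mul_le_mul_of_nonneg_left hxy (neg_nonneg.mpr hp.le)]
  have hbound : -p * ‖x‖ ^ p * ‖x - y‖ ≤ (1 - 2 * p) * ‖y‖ * alphaD p x y :=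
    (neg_mul_norm_rpow_mul_norm_sub_le_mul_alphaD hp.le hx hxy).trans
      (mul_le_mul_of_nonneg_right hfactor (norm_nonneg _))
  calc p / (2 * p - 1) * (‖x‖ ^ p / ‖y‖) * ‖x - y‖
      = -p * ‖x‖ ^ p * ‖x - y‖ / ((1 - 2 * p) * ‖y‖) := by
        rw [← neg_div_neg_eq p, neg_sub, div_mul_div_comm, div_mul_eq_mul_div]
    _ ≤ alphaD p x y := by
        rwa [div_le_iff₀' (mul_pos (by linarith) hy₀)]
end

section
/- Let X be a real inner product space and let p, q ∈ ℝ with |p| ≥ |q|. Then for all nonzero vectors x, y ∈ X: α_p[x,y] ≥ ((‖x‖^p + ‖y‖^p)/(‖x‖^q + ‖y‖^q))·α_q[x,y]. -/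
/-! Let `a = ‖x‖`, `b = ‖y‖`, and let `θ` be the angle between `x` and `y`. The law of cosines gives
`(α_p[x,y] / (a ^ p + b ^ p)) ^ 2 = 1 - (1 + cos θ) / (1 + cosh (p * log (a / b)))`,
whose right-hand side is nondecreasing in `|p|`. -/

open Real InnerProductGeometry

theorem sq_add_eq_two_mul_one_add_cosh_log_div_mul {a b : ℝ} (ha : 0 < a) (hb : 0 < b) :
    (a + b) ^ 2 = 2 * (1 + cosh (log (a / b))) * (a * b) := by
  rw [cosh_log (div_pos ha hb)]
  field_simp
  ring

theorem norm_norm_rpow_sub_one_smul {E : Type*} [SeminormedAddCommGroup E] [NormedSpace ℝ E]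
    {x : E} (hx : ‖x‖ ≠ 0) (p : ℝ) : ‖‖x‖ ^ (p - 1) • x‖ = ‖x‖ ^ p := by
  rw [norm_smul, norm_of_nonneg (by positivity), rpow_sub_one hx, div_mul_cancel₀ _ hx]

namespace alphaD

theorem nonneg {X : Type*} [NormedAddCommGroup X] [NormedSpace ℝ X] (p : ℝ) (x y : X) :
    0 ≤ alphaD p x y :=
  norm_nonneg _

variable {X : Type*} [NormedAddCommGroup X] [InnerProductSpace ℝ X] {x y : X}

theorem sq_eq_sub_one_add_cos_angle (p : ℝ) (hx : x ≠ 0) (hy : y ≠ 0) :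
    alphaD p x y ^ 2 =
      (‖x‖ ^ p + ‖y‖ ^ p) ^ 2 - 2 * (1 + cos (angle x y)) * (‖x‖ ^ p * ‖y‖ ^ p) := by
  have hx' := norm_pos_iff.2 hx
  have hy' := norm_pos_iff.2 hy
  have law_of_cosines :=
    norm_sub_sq_eq_norm_sq_add_norm_sq_sub_two_mul_norm_mul_norm_mul_cos_angle
      (‖x‖ ^ (p - 1) • x) (‖y‖ ^ (p - 1) • y)
  rw [angle_smul_left_of_pos _ _ (rpow_pos_of_pos hx' _),
    angle_smul_right_of_pos _ _ (rpow_pos_of_pos hy' _),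
    norm_norm_rpow_sub_one_smul hx'.ne', norm_norm_rpow_sub_one_smul hy'.ne'] at law_of_cosines
  rw [alphaD, sq, law_of_cosines]
  ring

theorem div_rpow_add_rpow_sq (p : ℝ) (hx : x ≠ 0) (hy : y ≠ 0) :
    (alphaD p x y / (‖x‖ ^ p + ‖y‖ ^ p)) ^ 2 =
      1 - (1 + cos (angle x y)) / (1 + cosh (p * log (‖x‖ / ‖y‖))) := by
  have hx' := norm_pos_iff.2 hx
  have hy' := norm_pos_iff.2 hy
  have hxp := rpow_pos_of_pos hx' p
  have hyp := rpow_pos_of_pos hy' p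
  have hsum : (‖x‖ ^ p + ‖y‖ ^ p) ^ 2 =
      2 * (1 + cosh (p * log (‖x‖ / ‖y‖))) * (‖x‖ ^ p * ‖y‖ ^ p) := by
    rw [sq_add_eq_two_mul_one_add_cosh_log_div_mul hxp hyp, ← div_rpow hx'.le hy'.le,
      log_rpow (div_pos hx' hy')]
  rw [div_pow, sq_eq_sub_one_add_cos_angle p hx hy, hsum]
  field_simp

theorem div_rpow_add_rpow_le_of_abs_le {p q : ℝ} (hpq : |q| ≤ |p|) (hx : x ≠ 0) (hy : y ≠ 0) :
    alphaD q x y / (‖x‖ ^ q + ‖y‖ ^ q) ≤ alphaD p x y / (‖x‖ ^ p + ‖y‖ ^ p) := by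
  have hcos : 0 ≤ 1 + cos (angle x y) := by linarith [neg_one_le_cos (angle x y)]
  have hcosh : cosh (q * log (‖x‖ / ‖y‖)) ≤ cosh (p * log (‖x‖ / ‖y‖)) := by
    rw [cosh_le_cosh, abs_mul, abs_mul]
    gcongr
  have hnonneg := nonneg p x y
  refine le_of_sq_le_sq ?_ (by positivity)
  rw [div_rpow_add_rpow_sq q hx hy, div_rpow_add_rpow_sq p hx hy]
  gcongr

end alphaD

theorem pAngular_ratio_inner
    {X : Type*} [NormedAddCommGroup X] [InnerProductSpace ℝ X]
    (p q : ℝ) (hpq : |q| ≤ |p|) (x y : X) (hx : x ≠ 0) (hy : y ≠ 0) :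
    alphaD p x y
      ≥ ((‖x‖ ^ p + ‖y‖ ^ p) / (‖x‖ ^ q + ‖y‖ ^ q)) * alphaD q x y := by
  calc (‖x‖ ^ p + ‖y‖ ^ p) / (‖x‖ ^ q + ‖y‖ ^ q) * alphaD q x y
      = alphaD q x y / (‖x‖ ^ q + ‖y‖ ^ q) * (‖x‖ ^ p + ‖y‖ ^ p) := by ring
    _ ≤ alphaD p x y := (le_div_iff₀ (by positivity)).1
      (alphaD.div_rpow_add_rpow_le_of_abs_le hpq hx hy)
end
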